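/- arXiv:2305.09354 — 9 statements merged into one kernel-verified Lean document; each statement's English description precedes it below -/
import Mathlib

section
/- Let τ₁, τ₂ ≥ 0 be real numbers with τ₁ + τ₂ > 0 and let γ be a real number with 0 < |γ| < 1. Then every complex number s satisfying e^{τ₁ s} + γ e^{−τ₂ s} = 0 has real part Re(s) = log|γ| / (τ₁ + τ₂); in particular Re(s) < 0. -/
/-- Every root of the first factor `e^{τ₁ s} + γ e^{-τ₂ s}` of the
closed-loop characteristic equation has real part `log |γ| / (τ₁ + τ₂) < 0`. -/
theorem stmt_0 (τ₁ τ₂ γ : ℝ) (hτ₁ : 0 ≤ τ₁) (hτ₂ : 0 ≤ τ₂) (hsum : 0 < τ₁ + τ₂)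
    (hγ0 : 0 < |γ|) (hγ1 : |γ| < 1) (s : ℂ)
    (hs : Complex.exp ((τ₁ : ℂ) * s) + (γ : ℂ) * Complex.exp (-(τ₂ : ℂ) * s) = 0) :
    s.re = Real.log |γ| / (τ₁ + τ₂) ∧ s.re < 0 := by
  -- Taking moduli in `e^{τ₁ s} = -γ e^{-τ₂ s}` removes the imaginary part of `s`.
  have hnorm : Real.exp (τ₁ * s.re) = |γ| * Real.exp (-(τ₂ * s.re)) := by
    have h := congrArg norm (eq_neg_of_add_eq_zero_left hs)
    simpa [Complex.norm_exp] using h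
  have hlog : τ₁ * s.re = Real.log |γ| + -(τ₂ * s.re) := by
    have h := congrArg Real.log hnorm
    rwa [Real.log_mul hγ0.ne' (Real.exp_ne_zero _), Real.log_exp, Real.log_exp] at h
  have hre : s.re = Real.log |γ| / (τ₁ + τ₂) := by
    rw [eq_div_iff hsum.ne']
    linarith
  exact ⟨hre, hre ▸ div_neg_of_neg_of_pos (Real.log_neg hγ0 hγ1) hsum⟩
end

section
/- Let τ₁, τ₂ ≥ 0 with τ₁ + τ₂ > 0, let γ be real with 0 < |γ| < 1, and let κ₀, …, κ_{n−1} be real coefficients such that the polynomial p(s) = sⁿ + Σ_{i=0}^{n−1} κᵢ sⁱ is Hurwitz, i.e., every complex root of p has negative real part. Then every complex root of the characteristic function 𝔞_cl(s) = (e^{τ₁ s} + γ e^{−τ₂ s}) · p(s) has negative real part. -/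
/-- Every complex root of the closed-loop characteristic function
`𝔞_cl(s) = (e^{τ₁ s} + γ e^{-τ₂ s}) (sⁿ + Σ κᵢ sⁱ)` has negative real part,
provided `0 < |γ| < 1` and the polynomial factor is Hurwitz. -/
theorem stmt_1 (n : ℕ) (τ₁ τ₂ γ : ℝ) (κ : Fin n → ℝ)
    (hτ₁ : 0 ≤ τ₁) (hτ₂ : 0 ≤ τ₂) (hsum : 0 < τ₁ + τ₂)
    (hγ0 : 0 < |γ|) (hγ1 : |γ| < 1)
    (hHurwitz : ∀ s : ℂ, s ^ n + ∑ i : Fin n, (κ i : ℂ) * s ^ (i : ℕ) = 0 → s.re < 0)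
    (s : ℂ)
    (hs : (Complex.exp ((τ₁ : ℂ) * s) + (γ : ℂ) * Complex.exp (-(τ₂ : ℂ) * s)) *
      (s ^ n + ∑ i : Fin n, (κ i : ℂ) * s ^ (i : ℕ)) = 0) :
    s.re < 0 := by
  rcases mul_eq_zero.mp hs with h | h
  · by_contra! hre
    -- For `0 ≤ s.re`, `‖e^{τ₁ s}‖ ≥ 1 > |γ| ≥ ‖γ e^{-τ₂ s}‖`, so the two terms cannot cancel.
    have hnorm := congrArg norm (eq_neg_of_add_eq_zero_left h)
    rw [norm_neg, norm_mul, Complex.norm_exp, Complex.norm_exp, Complex.norm_real,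
      Real.norm_eq_abs, Complex.re_ofReal_mul, ← Complex.ofReal_neg,
      Complex.re_ofReal_mul] at hnorm
    have h1 : 1 ≤ Real.exp (τ₁ * s.re) := Real.one_le_exp (mul_nonneg hτ₁ hre)
    have h2 : Real.exp (-τ₂ * s.re) ≤ 1 :=
      Real.exp_le_one_iff.mpr (by nlinarith [mul_nonneg hτ₂ hre])
    nlinarith
  · exact hHurwitz s h
end

section
/- Let T > 0, let c be a real number with |c| < 1, let t₀ ∈ ℝ, let α > 0 and C ≥ 0, and let f, g : ℝ → ℝ satisfy f(t) = c · f(t − T) + g(t) for all t ≥ t₀, with |f(t)| ≤ M for all t ∈ [t₀ − T, t₀] and |g(t)| ≤ C · e^{−α (t − t₀)} for all t ≥ t₀. Then there exist constants C' > 0 and β > 0 such that |f(t)| ≤ C' · e^{−β (t − t₀)} for all t ≥ t₀. -/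
/-!
Pick `r > 1` with `|c| r < 1` and a rate `0 < β ≤ α` with `e^{βT} ≤ r`. If `|f(t - T)|` is
at most `K e^{-β(t - T - t₀)}`, the recursion gives `|f(t)| ≤ (|c| r K + C) e^{-β(t - t₀)}`, and
this is at most `K e^{-β(t - t₀)}` once `K (1 - |c| r) ≥ C`. Taking also `K ≥ M`, the bound holds
on the initial interval `[t₀ - T, t₀]` and propagates by induction over intervals of length `T`.
-/

/-- Exponential decay for the inhomogeneous delay recursion
`f(t) = c f(t-T) + g(t)` with `|c| < 1` and exponentially decaying forcing `g`. -/
theorem stmt_3 (T c t₀ α C M : ℝ) (f g : ℝ → ℝ) (hT : 0 < T) (hc : |c| < 1)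
    (hα : 0 < α) (hC : 0 ≤ C)
    (hf : ∀ t, t₀ ≤ t → f t = c * f (t - T) + g t)
    (hM : ∀ t ∈ Set.Icc (t₀ - T) t₀, |f t| ≤ M)
    (hg : ∀ t, t₀ ≤ t → |g t| ≤ C * Real.exp (-α * (t - t₀))) :
    ∃ C' > 0, ∃ β > 0, ∀ t, t₀ ≤ t → |f t| ≤ C' * Real.exp (-β * (t - t₀)) := by
  have hc0 := abs_nonneg c
  have hM0 : 0 ≤ M := (abs_nonneg _).trans (hM t₀ ⟨by linarith, le_rfl⟩)
  obtain ⟨r, hr1, hcr⟩ : ∃ r : ℝ, 1 < r ∧ |c| * r < 1 := by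
    refine ⟨2 / (1 + |c|), ?_, ?_⟩
    · rw [lt_div_iff₀ (by linarith)]; linarith
    · rw [← mul_div_assoc, div_lt_one (by linarith)]; linarith
  obtain ⟨β, hβ, hβα, hβr⟩ : ∃ β : ℝ, 0 < β ∧ β ≤ α ∧ Real.exp (β * T) ≤ r := by
    refine ⟨min α (Real.log r / T), lt_min hα (div_pos (Real.log_pos hr1) hT),
      min_le_left _ _, ?_⟩
    rw [← Real.le_log_iff_exp_le (by linarith), ← le_div_iff₀ hT]
    exact min_le_right _ _
  have hd : 0 < 1 - |c| * r := by linarith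
  obtain ⟨K, hK, hMK, hCK⟩ : ∃ K : ℝ, 0 < K ∧ M ≤ K ∧ |c| * r * K + C ≤ K := by
    have h0 : 0 ≤ C / (1 - |c| * r) := div_nonneg hC hd.le
    refine ⟨C / (1 - |c| * r) + M + 1, by linarith, by linarith, ?_⟩
    have h1 : C / (1 - |c| * r) * (1 - |c| * r) = C := div_mul_cancel₀ _ hd.ne'
    have h2 : 0 ≤ (M + 1) * (1 - |c| * r) := by positivity
    linarith
  have key : ∀ n : ℕ, ∀ t, t₀ - T ≤ t → t ≤ t₀ + n * T →
      |f t| ≤ K * Real.exp (-β * (t - t₀)) := by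
    intro n
    induction n with
    | zero =>
      intro t h1 h2
      have h2 : t ≤ t₀ := by simpa using h2
      have h3 : 1 ≤ Real.exp (-β * (t - t₀)) := Real.one_le_exp (by nlinarith)
      nlinarith [hM t ⟨h1, h2⟩]
    | succ n ih =>
      intro t h1 h2
      push_cast at h2
      rcases le_total t t₀ with h | h
      · exact ih t h1 (h.trans (le_add_of_nonneg_right (by positivity)))
      · have hprev := ih (t - T) (by linarith) (by linarith)
        have hE : Real.exp (-β * (t - T - t₀))
            = Real.exp (β * T) * Real.exp (-β * (t - t₀)) := by
          rw [← Real.exp_add]; ring_nf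
        have hforce : |g t| ≤ C * Real.exp (-β * (t - t₀)) := by
          refine (hg t h).trans ?_
          gcongr
        rw [hf t h]
        calc |c * f (t - T) + g t| ≤ |c| * |f (t - T)| + |g t| := by
              rw [← abs_mul]; exact abs_add_le _ _
          _ ≤ |c| * (K * (r * Real.exp (-β * (t - t₀)))) + C * Real.exp (-β * (t - t₀)) := by
              rw [hE] at hprev
              gcongr
              exact hprev.trans (by gcongr)
          _ = (|c| * r * K + C) * Real.exp (-β * (t - t₀)) := by ring
          _ ≤ K * Real.exp (-β * (t - t₀)) := by gcongr
  refine ⟨K, hK, β, hβ, fun t ht => ?_⟩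
  obtain ⟨n, hn⟩ := exists_nat_ge ((t - t₀) / T)
  rw [div_le_iff₀ hT] at hn
  exact key n t (by linarith) (by linarith)
end

section
/- Let F be a real n×n matrix and b ∈ ℝⁿ such that the Kalman controllability matrix M_c = [b, Fb, …, F^{n−1}b] is invertible. Then for every monic real polynomial p of degree n there exists a vector k ∈ ℝⁿ such that the characteristic polynomial of F + b kᵀ equals p. In particular, there exists k ∈ ℝⁿ such that every complex eigenvalue of F + b kᵀ has negative real part. -/
open Matrix

/-!
Pole placement by Ackermann's formula. Write `n = m + 1` and let `c` be the last row of the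
inverse controllability matrix, so that `c F ^ j b = 0` for `j < m` and `c F ^ m b = 1`.
Put `k = -c p(F)` and `G = F + b kᵀ`. Since `c F ^ j b` vanishes for `j < m`, one has
`c G ^ j = c F ^ j` for `j ≤ m`, while `c G ^ (m + 1) = c F ^ (m + 1) + k`; as `p` is monic of degree
`m + 1`, this gives `c p(G) = c p(F) + k = 0`. By Cayley–Hamilton the difference `q` of the
characteristic polynomial of `G` and `p` satisfies `c q(G) = 0`, and `deg q ≤ m`, so
`c q(F) = 0`. If `q` were nonzero of degree `d`, then `c q(F) F ^ (m - d) b` would be its leading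
coefficient, a contradiction. The Hurwitz claim is the case `p = (X + 1) ^ n`.
-/

/-- `c q(F)` as a combination of the row vectors `c F ^ i`. -/
lemma vecMul_aeval_eq_sum {n : ℕ} (c : Fin n → ℝ) (F : Matrix (Fin n) (Fin n) ℝ)
    (q : Polynomial ℝ) (N : ℕ) (hN : q.natDegree < N) :
    c ᵥ* (Polynomial.aeval F q) = ∑ i ∈ Finset.range N, q.coeff i • (c ᵥ* F ^ i) := by
  rw [Polynomial.aeval_eq_sum_range' hN, Matrix.vecMul_sum]
  simp only [Matrix.vecMul_smul]

/-- A row vector `c` with `c F ^ j b = 0` for `j < m` and `c F ^ m b = 1` is annihilated by no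
nonzero polynomial in `F` of degree at most `m`. -/
lemma eq_zero_of_vecMul_aeval_eq_zero {n m : ℕ} (F : Matrix (Fin n) (Fin n) ℝ)
    (b c : Fin n → ℝ) (h0 : ∀ j < m, (c ᵥ* F ^ j) ⬝ᵥ b = 0) (h1 : (c ᵥ* F ^ m) ⬝ᵥ b = 1)
    (q : Polynomial ℝ) (hq : q.natDegree ≤ m) (h : c ᵥ* (Polynomial.aeval F q) = 0) :
    q = 0 := by
  rw [vecMul_aeval_eq_sum c F q _ (Nat.lt_succ_self _)] at h
  -- Multiply by `F ^ (m - d) b`, `d = deg q`: only the leading term survives.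
  have h2 : ((∑ i ∈ Finset.range (q.natDegree + 1), q.coeff i • (c ᵥ* F ^ i)) ᵥ*
      F ^ (m - q.natDegree)) ⬝ᵥ b = 0 := by
    rw [h]; simp
  rw [Matrix.sum_vecMul, sum_dotProduct, Finset.sum_range_succ, Finset.sum_eq_zero] at h2
  · simp only [Matrix.smul_vecMul, Matrix.vecMul_vecMul, ← pow_add, smul_dotProduct] at h2
    rw [Nat.add_sub_cancel' hq, h1] at h2
    simpa using h2
  · intro i hi
    rw [Finset.mem_range] at hi
    rw [Matrix.smul_vecMul, Matrix.vecMul_vecMul, ← pow_add, smul_dotProduct, h0 _ (by omega),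
      smul_zero]

lemma exists_charpoly_eq (n : ℕ) (F : Matrix (Fin n) (Fin n) ℝ) (b : Fin n → ℝ)
    (hctrb : IsUnit (Matrix.of fun i j : Fin n => (F ^ (j : ℕ)).mulVec b i))
    (p : Polynomial ℝ) (hp : p.Monic) (hn : p.natDegree = n) :
    ∃ k : Fin n → ℝ, (F + Matrix.vecMulVec b k).charpoly = p := by
  rcases n with _ | m
  · refine ⟨0, ?_⟩
    rw [hp.natDegree_eq_zero.mp hn]
    simp [Matrix.charpoly]
  set M := Matrix.of fun i j : Fin (m + 1) => (F ^ (j : ℕ)).mulVec b i with hM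
  obtain ⟨c, hc⟩ : ∃ c : Fin (m + 1) → ℝ, ∀ j : Fin (m + 1),
      (c ᵥ* F ^ (j : ℕ)) ⬝ᵥ b = if j = Fin.last m then 1 else 0 := by
    refine ⟨M⁻¹ (Fin.last m), fun j => ?_⟩
    have h := congrFun (congrFun
      (Matrix.nonsing_inv_mul M ((Matrix.isUnit_iff_isUnit_det M).mp hctrb)) (Fin.last m)) j
    rw [← Matrix.dotProduct_mulVec]
    rw [Matrix.one_apply] at h
    simp only [eq_comm (a := j)]
    exact h
  have h0 : ∀ j < m, (c ᵥ* F ^ j) ⬝ᵥ b = 0 := fun j hj => by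
    have := hc ⟨j, by omega⟩
    rwa [if_neg (by simp [Fin.ext_iff]; omega)] at this
  have h1 : (c ᵥ* F ^ m) ⬝ᵥ b = 1 := by simpa using hc (Fin.last m)
  set k := -(c ᵥ* (Polynomial.aeval F p)) with hk
  set G := F + Matrix.vecMulVec b k with hG
  have hstep : ∀ v : Fin (m + 1) → ℝ, v ᵥ* G = v ᵥ* F + (v ⬝ᵥ b) • k := fun v => by
    rw [hG, Matrix.vecMul_add, Matrix.vecMul_vecMulVec]
  have hpow : ∀ j ≤ m, c ᵥ* G ^ j = c ᵥ* F ^ j := by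
    intro j
    induction j with
    | zero => simp
    | succ j ih =>
      intro hj
      rw [pow_succ, ← Matrix.vecMul_vecMul, ih (by omega), hstep, h0 j (by omega), zero_smul,
        add_zero, Matrix.vecMul_vecMul, ← pow_succ]
  have htop : c ᵥ* G ^ (m + 1) = c ᵥ* F ^ (m + 1) + k := by
    rw [pow_succ, ← Matrix.vecMul_vecMul, hpow m le_rfl, hstep, h1, one_smul,
      Matrix.vecMul_vecMul, ← pow_succ]
  have hsum : ∀ q : Polynomial ℝ, ∑ i ∈ Finset.range (m + 1), q.coeff i • (c ᵥ* G ^ i) =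
      ∑ i ∈ Finset.range (m + 1), q.coeff i • (c ᵥ* F ^ i) := fun q =>
    Finset.sum_congr rfl fun i hi => by
      rw [hpow i (by rw [Finset.mem_range] at hi; omega)]
  have hcoeff : p.coeff (m + 1) = 1 := by rw [← hn]; exact hp
  have hpG : c ᵥ* (Polynomial.aeval G p) = 0 := by
    have hF := vecMul_aeval_eq_sum c F p (m + 2) (by omega)
    rw [vecMul_aeval_eq_sum c G p (m + 2) (by omega), Finset.sum_range_succ, hsum, htop, hcoeff,
      one_smul, ← add_assoc, hk, hF, Finset.sum_range_succ _ (m + 1), hcoeff, one_smul]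
    exact add_neg_cancel _
  have hGdeg : G.charpoly.natDegree = m + 1 := by simp [Matrix.charpoly_natDegree_eq_dim]
  have hdeg : (G.charpoly - p).natDegree ≤ m := by
    rw [Polynomial.natDegree_le_iff_coeff_eq_zero]
    intro N hN
    rw [Polynomial.coeff_sub]
    rcases Nat.lt_or_ge (m + 1) N with h | h
    · rw [Polynomial.coeff_eq_zero_of_natDegree_lt (by omega),
        Polynomial.coeff_eq_zero_of_natDegree_lt (by omega), sub_zero]
    · obtain rfl : N = m + 1 := by omega
      have : G.charpoly.coeff (m + 1) = 1 := by
        have hmonic := (Matrix.charpoly_monic G).coeff_natDegree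
        rwa [hGdeg] at hmonic
      rw [this, hcoeff, sub_self]
  have hq : c ᵥ* (Polynomial.aeval G (G.charpoly - p)) = 0 := by
    rw [map_sub, Matrix.aeval_self_charpoly, zero_sub, Matrix.vecMul_neg, hpG, neg_zero]
  refine ⟨k, sub_eq_zero.mp (eq_zero_of_vecMul_aeval_eq_zero F b c h0 h1 _ hdeg ?_)⟩
  rw [vecMul_aeval_eq_sum c F _ (m + 1) (Nat.lt_succ_of_le hdeg), ← hsum,
    ← vecMul_aeval_eq_sum c G _ (m + 1) (Nat.lt_succ_of_le hdeg), hq]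

/-- Pole placement for a controllable pair `(F, b)`: every monic
polynomial of degree `n` can be assigned as characteristic polynomial of
`F + b kᵀ`; in particular `F + b kᵀ` can be made Hurwitz. -/
theorem stmt_6 (n : ℕ) (F : Matrix (Fin n) (Fin n) ℝ) (b : Fin n → ℝ)
    (hctrb : IsUnit (Matrix.of fun i j : Fin n => (F ^ (j : ℕ)).mulVec b i)) :
    (∀ p : Polynomial ℝ, p.Monic → p.natDegree = n →
      ∃ k : Fin n → ℝ, (F + Matrix.vecMulVec b k).charpoly = p) ∧
    (∃ k : Fin n → ℝ, ∀ μ : ℂ,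
      (((F + Matrix.vecMulVec b k).charpoly).map (algebraMap ℝ ℂ)).IsRoot μ →
        μ.re < 0) := by
  refine ⟨exists_charpoly_eq n F b hctrb, ?_⟩
  obtain ⟨k, hk⟩ := exists_charpoly_eq n F b hctrb ((Polynomial.X + Polynomial.C 1) ^ n)
    ((Polynomial.monic_X_add_C 1).pow n)
    (by rw [Polynomial.natDegree_pow, Polynomial.natDegree_X_add_C, mul_one])
  refine ⟨k, fun μ hμ => ?_⟩
  rw [hk] at hμ
  have h : (μ + 1) ^ n = 0 := by simpa [Polynomial.IsRoot] using hμ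
  have h' : μ = -1 := eq_neg_of_add_eq_zero_left (eq_zero_of_pow_eq_zero h)
  simp [h']
end

section
/- Let F be a real n×n matrix and b ∈ ℝⁿ such that the Kalman controllability matrix M_c = [b, Fb, …, F^{n−1}b] is invertible. Let hᵀ = e_nᵀ M_c^{−1} and let T_c be the n×n matrix whose i-th row is hᵀ F^{i−1} for i = 1, …, n. Suppose ξ : ℝ → ℝⁿ is differentiable and u : ℝ → ℝ is a function such that ξ'(t) = F ξ(t) + b u(t) for all t, and define y(t) = hᵀ ξ(t). Then y is n times differentiable, T_c is invertible, ξ(t) = T_c^{−1} (y(t), y'(t), …, y^{(n−1)}(t))ᵀ for all t, and u(t) = y^{(n)}(t) − e_nᵀ T_c F T_c^{−1} (y(t), y'(t), …, y^{(n−1)}(t))ᵀ for all t. -/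
/-!
The last row `h` of `Mc⁻¹` satisfies `h Fʲ b = 0` for `j < n - 1` and `h Fⁿ⁻¹ b = 1`.
Hence the input does not enter the first `n - 1` derivatives of `y = h ξ`, so that
`y⁽ᵐ⁾ = h Fᵐ ξ` for `m < n` (the vector of these is `Tc ξ`) and `y⁽ⁿ⁾ = h Fⁿ ξ + u`, where
`h Fⁿ` is the last row of `Tc F`. The matrix `Tc Mc` has entries `h Fⁱ⁺ʲ b`; reversing its
columns gives a lower unitriangular matrix, so `Tc` is invertible.
-/

open Matrix

lemma hasDerivAt_output {n : ℕ} {F : Matrix (Fin n) (Fin n) ℝ} {b : Fin n → ℝ}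
    {ξ : ℝ → Fin n → ℝ} {u : ℝ → ℝ}
    (hξ : ∀ t : ℝ, HasDerivAt ξ (F *ᵥ ξ t + u t • b) t) (h : Fin n → ℝ) (m : ℕ) (t : ℝ) :
    HasDerivAt (fun t => (h ᵥ* F ^ m) ⬝ᵥ ξ t)
      ((h ᵥ* F ^ (m + 1)) ⬝ᵥ ξ t + u t * (h ⬝ᵥ (F ^ m *ᵥ b))) t := by
  have key : HasDerivAt (fun t => (h ᵥ* F ^ m) ⬝ᵥ ξ t)
      ((h ᵥ* F ^ m) ⬝ᵥ (F *ᵥ ξ t + u t • b)) t := by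
    simp only [dotProduct]
    exact HasDerivAt.fun_sum fun i _ => ((hasDerivAt_pi.1 (hξ t)) i).const_mul _
  convert key using 1
  rw [dotProduct_add, dotProduct_smul, dotProduct_mulVec, dotProduct_mulVec, vecMul_vecMul,
    ← pow_succ, smul_eq_mul]

/-- For a controllable pair `(F, b)`, `y(t) = hᵀ ξ(t)` with
`hᵀ = e_nᵀ M_c⁻¹` is a flat output of `ξ' = F ξ + b u`: it is `n` times
differentiable and differentially parametrizes the state and the input. -/
theorem stmt_7 (n : ℕ) (hn : 0 < n) (F : Matrix (Fin n) (Fin n) ℝ) (b : Fin n → ℝ)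
    (Mc : Matrix (Fin n) (Fin n) ℝ)
    (hMc : Mc = Matrix.of fun i j : Fin n => (F ^ (j : ℕ)).mulVec b i)
    (hctrb : IsUnit Mc)
    (h : Fin n → ℝ) (hh : h = Mc⁻¹ ⟨n - 1, by omega⟩)
    (Tc : Matrix (Fin n) (Fin n) ℝ)
    (hTc : Tc = Matrix.of fun i j : Fin n => Matrix.vecMul h (F ^ (i : ℕ)) j)
    (ξ : ℝ → Fin n → ℝ) (u : ℝ → ℝ)
    (hξ : ∀ t : ℝ, HasDerivAt ξ (F.mulVec (ξ t) + u t • b) t)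
    (y : ℝ → ℝ) (hy : y = fun t => h ⬝ᵥ ξ t) :
    (∀ m : ℕ, m < n → Differentiable ℝ (iteratedDeriv m y)) ∧
    IsUnit Tc ∧
    (∀ t : ℝ, ξ t = Tc⁻¹.mulVec fun i : Fin n => iteratedDeriv (i : ℕ) y t) ∧
    (∀ t : ℝ, u t = iteratedDeriv n y t -
      (Tc * F * Tc⁻¹) ⟨n - 1, by omega⟩ ⬝ᵥ fun i : Fin n => iteratedDeriv (i : ℕ) y t) := by
  have hdet : IsUnit Mc.det := (Matrix.isUnit_iff_isUnit_det _).1 hctrb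
  have hFb : ∀ j, j < n → h ⬝ᵥ (F ^ j *ᵥ b) = if j = n - 1 then 1 else 0 := by
    intro j hj
    have e := congrFun (congrFun (Matrix.nonsing_inv_mul Mc hdet) ⟨n - 1, by omega⟩) ⟨j, hj⟩
    rw [Matrix.mul_apply, Matrix.one_apply] at e
    have e2 : h ⬝ᵥ (F ^ j *ᵥ b) = ∑ k, Mc⁻¹ ⟨n - 1, by omega⟩ k * Mc k ⟨j, hj⟩ := by
      rw [hh, dotProduct]
      refine Finset.sum_congr rfl fun k _ => ?_
      congr 1
      rw [hMc]
      rfl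
    rw [e2, e]
    simp only [Fin.mk.injEq, eq_comm]
  have hrow : ∀ i : Fin n, Tc i = h ᵥ* F ^ (i : ℕ) := fun i => by rw [hTc]; rfl
  have hiter : ∀ m, m < n → iteratedDeriv m y = fun t => (h ᵥ* F ^ m) ⬝ᵥ ξ t := by
    intro m
    induction m with
    | zero => intro _; simp [hy]
    | succ m ih =>
      intro hm
      rw [iteratedDeriv_succ, ih (by omega)]
      funext t
      rw [(hasDerivAt_output hξ h m t).deriv, hFb m (by omega), if_neg (by omega)]
      simp
  have hTu : IsUnit Tc := by
    have hent : ∀ i j : Fin n, (Tc * Mc.submatrix id Fin.rev) i j =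
        h ⬝ᵥ (F ^ ((i : ℕ) + (n - (j + 1))) *ᵥ b) := by
      intro i j
      rw [pow_add, ← mulVec_mulVec, dotProduct_mulVec, ← hrow, Matrix.mul_apply, dotProduct]
      refine Finset.sum_congr rfl fun k _ => ?_
      congr 1
      rw [hMc]
      simp [Fin.val_rev]
    have htri : (Tc * Mc.submatrix id Fin.rev).det = 1 := by
      rw [Matrix.det_of_isLowerTriangular]
      · refine Finset.prod_eq_one fun i _ => ?_
        rw [hent, hFb _ (by omega), if_pos (by omega)]
      · intro i j hij
        have hij' : i < j := hij
        rw [hent, hFb _ (by omega), if_neg (by omega)]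
    rw [Matrix.det_mul] at htri
    exact (Matrix.isUnit_iff_isUnit_det _).2 (IsUnit.of_mul_eq_one _ htri)
  have hTdet : IsUnit Tc.det := (Matrix.isUnit_iff_isUnit_det _).1 hTu
  have hvec : ∀ t, (fun i : Fin n => iteratedDeriv (i : ℕ) y t) = Tc *ᵥ ξ t := by
    intro t
    funext i
    rw [hiter i i.2, ← hrow]
    rfl
  refine ⟨fun m hm => ?_, hTu, fun t => ?_, fun t => ?_⟩
  · rw [hiter m hm]
    exact fun t => (hasDerivAt_output hξ h m t).differentiableAt
  · rw [hvec, mulVec_mulVec, Matrix.nonsing_inv_mul _ hTdet, one_mulVec]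
  · have hlast : (Tc * F * Tc⁻¹) ⟨n - 1, by omega⟩ ⬝ᵥ (Tc *ᵥ ξ t) = (h ᵥ* F ^ n) ⬝ᵥ ξ t := by
      have e : (Tc * F * Tc⁻¹) ⟨n - 1, by omega⟩ ⬝ᵥ (Tc *ᵥ ξ t) =
          ((Tc * F * Tc⁻¹) *ᵥ (Tc *ᵥ ξ t)) ⟨n - 1, by omega⟩ := rfl
      rw [e, mulVec_mulVec, Matrix.mul_assoc, Matrix.nonsing_inv_mul _ hTdet, Matrix.mul_one]
      change (Tc * F) ⟨n - 1, by omega⟩ ⬝ᵥ ξ t = _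
      rw [Matrix.mul_apply_eq_vecMul, hrow, vecMul_vecMul, ← pow_succ, Nat.sub_add_cancel hn]
    have hn1 : iteratedDeriv n y t = (h ᵥ* F ^ n) ⬝ᵥ ξ t + u t := by
      have e : iteratedDeriv (n - 1 + 1) y t = (h ᵥ* F ^ (n - 1 + 1)) ⬝ᵥ ξ t + u t := by
        rw [iteratedDeriv_succ, hiter (n - 1) (by omega), (hasDerivAt_output hξ h _ t).deriv,
          hFb _ (by omega), if_pos rfl, mul_one]
      rwa [Nat.sub_add_cancel hn] at e
    rw [hvec, hlast, hn1]
    ring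
end

section
/- Let F be a real n×n matrix and b ∈ ℝⁿ such that the Kalman controllability matrix M_c = [b, Fb, …, F^{n−1}b] is invertible. Let hᵀ = e_nᵀ M_c^{−1} and let T_c be the n×n matrix whose i-th row is hᵀ F^{i−1} for i = 1, …, n. Then: (i) hᵀ F^{k−1} b = 0 for k = 1, …, n−1 and hᵀ F^{n−1} b = 1; (ii) T_c is invertible; (iii) T_c b = e_n; and (iv) T_c F T_c^{−1} is the companion matrix of the characteristic polynomial of F, i.e., if det(sI − F) = sⁿ + Σ_{i=0}^{n−1} aᵢ sⁱ, then T_c F T_c^{−1} has ones on the superdiagonal, last row (−a₀, −a₁, …, −a_{n−1}), and zeros elsewhere. -/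
open Matrix Polynomial

/-!
Since `h` is the last row of `Mc⁻¹`, the identity `Mc⁻¹ * Mc = 1` read along that row says
`h F^m b = δ_{m, n-1}` for `m < n`, which is (i) and, stacked over `m`, (iii).
The entries of `Tc * Mc` are `h F^(i+j) b`, so reversing its columns gives a lower triangular
matrix with unit diagonal; hence `Tc * Mc`, and with it `Tc`, is invertible.
For (iv) it suffices that `Tc * F = A * Tc` with `A` the companion matrix: row `i < n - 1` of
`Tc * F` is `h F^(i+1)`, the next row of `Tc`, and the last row `h F^n` is expanded by the
Cayley–Hamilton theorem.
-/

/-- Properties of the transformation `T_c` into controller canonical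
form for a controllable pair `(F, b)`:
(i) `hᵀ F^{k-1} b = 0` for `k = 1, …, n-1` and `hᵀ F^{n-1} b = 1`;
(ii) `T_c` is invertible; (iii) `T_c b = e_n`;
(iv) `T_c F T_c⁻¹` is the companion matrix of the characteristic polynomial of `F`. -/
theorem stmt_8 (n : ℕ) (hn : 0 < n) (F : Matrix (Fin n) (Fin n) ℝ) (b : Fin n → ℝ)
    (Mc : Matrix (Fin n) (Fin n) ℝ)
    (hMc : Mc = Matrix.of fun i j : Fin n => (F ^ (j : ℕ)).mulVec b i)
    (hctrb : IsUnit Mc)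
    (h : Fin n → ℝ) (hh : h = Mc⁻¹ ⟨n - 1, by omega⟩)
    (Tc : Matrix (Fin n) (Fin n) ℝ)
    (hTc : Tc = Matrix.of fun i j : Fin n => Matrix.vecMul h (F ^ (i : ℕ)) j) :
    (∀ m : ℕ, m < n - 1 → Matrix.vecMul h (F ^ m) ⬝ᵥ b = 0) ∧
    (Matrix.vecMul h (F ^ (n - 1)) ⬝ᵥ b = 1) ∧
    IsUnit Tc ∧
    (Tc.mulVec b = Pi.single ⟨n - 1, by omega⟩ 1) ∧
    (∀ a : Fin n → ℝ,
      F.charpoly = X ^ n + ∑ i : Fin n, C (a i) * X ^ (i : ℕ) →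
      Tc * F * Tc⁻¹ = Matrix.of fun i j : Fin n =>
        if (i : ℕ) = n - 1 then -a j else if (j : ℕ) = (i : ℕ) + 1 then 1 else 0) := by
  have hdet : IsUnit Mc.det := (Matrix.isUnit_iff_isUnit_det _).1 hctrb
  have key : ∀ m : ℕ, m < n → Matrix.vecMul h (F ^ m) ⬝ᵥ b = if m = n - 1 then 1 else 0 := by
    intro m hm
    have e := congrFun (congrFun (Matrix.nonsing_inv_mul Mc hdet) ⟨n - 1, by omega⟩) ⟨m, hm⟩
    have e1 : (Mc⁻¹ * Mc) ⟨n - 1, by omega⟩ ⟨m, hm⟩ = h ⬝ᵥ ((F ^ m).mulVec b) := by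
      rw [Matrix.mul_apply, hh, dotProduct]
      refine Finset.sum_congr rfl fun k _ => ?_
      congr 1
      rw [hMc, Matrix.of_apply]
    rw [← Matrix.dotProduct_mulVec, ← e1, e, Matrix.one_apply]
    simp [Fin.ext_iff, eq_comm]
  have hrow : ∀ i : Fin n, Tc i = Matrix.vecMul h (F ^ (i : ℕ)) := by
    intro i
    rw [hTc]
    rfl
  have hunit : IsUnit Tc := by
    have hprod : ∀ i j : Fin n, (Tc * Mc) i j = Matrix.vecMul h (F ^ ((i : ℕ) + j)) ⬝ᵥ b := by
      intro i j
      have e : (Tc * Mc) i j = Tc i ⬝ᵥ ((F ^ (j : ℕ)).mulVec b) := by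
        rw [Matrix.mul_apply, dotProduct]
        refine Finset.sum_congr rfl fun k _ => ?_
        congr 1
        rw [hMc, Matrix.of_apply]
      rw [e, hrow, Matrix.dotProduct_mulVec, Matrix.vecMul_vecMul, ← pow_add]
    have htri : ((Tc * Mc).submatrix id Fin.revPerm).det = 1 := by
      rw [Matrix.det_of_lowerTriangular]
      · refine Finset.prod_eq_one fun i _ => ?_
        have hi := i.isLt
        rw [Matrix.submatrix_apply, hprod, key _ (by simp [Fin.val_rev]; omega), if_pos]
        simp [Fin.val_rev]; omega
      · intro i j hij
        have hij' : (i : ℕ) < j := hij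
        have hj := j.isLt
        rw [Matrix.submatrix_apply, hprod, key _ (by simp [Fin.val_rev]; omega), if_neg]
        simp [Fin.val_rev]; omega
    rw [Matrix.det_permute', Matrix.det_mul] at htri
    rw [Matrix.isUnit_iff_isUnit_det, isUnit_iff_ne_zero]
    intro h0
    simp [h0] at htri
  refine ⟨fun m hm => ?_, ?_, hunit, ?_, ?_⟩
  · rw [key m (by omega), if_neg (by omega)]
  · rw [key _ (by omega), if_pos rfl]
  · ext i
    rw [Matrix.mulVec, hrow, key _ i.isLt, Pi.single_apply]
    simp [Fin.ext_iff]
  · intro a ha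
    -- Cayley–Hamilton, solved for the top power and multiplied by `h` on the left.
    have hCH : Matrix.vecMul h (F ^ n) = ∑ j : Fin n, (-a j) • Tc j := by
      have e := Matrix.aeval_self_charpoly F
      rw [ha] at e
      simp only [map_add, map_pow, map_sum, map_mul, aeval_X, aeval_C,
        ← Algebra.smul_def] at e
      rw [eq_neg_of_add_eq_zero_left e, Matrix.vecMul_neg, ← Matrix.vecMulBilin_apply ℝ ℝ]
      simp [hrow]
    suffices hc : Tc * F = (Matrix.of fun i j : Fin n =>
        if (i : ℕ) = n - 1 then -a j else if (j : ℕ) = (i : ℕ) + 1 then (1 : ℝ) else 0) * Tc by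
      rw [hc, Matrix.mul_assoc, Matrix.mul_nonsing_inv _ ((Matrix.isUnit_iff_isUnit_det _).1 hunit),
        Matrix.mul_one]
    ext i k
    have e : (Tc * F) i k = Matrix.vecMul h (F ^ ((i : ℕ) + 1)) k := by
      rw [Matrix.mul_apply_eq_vecMul, hrow, Matrix.vecMul_vecMul, ← pow_succ]
    rw [e, Matrix.mul_apply]
    by_cases hi : (i : ℕ) = n - 1
    · have hi' : (i : ℕ) + 1 = n := by omega
      rw [hi', hCH]
      simp [hi]
    · have hlt : (i : ℕ) + 1 < n := by omega
      rw [Finset.sum_eq_single ⟨(i : ℕ) + 1, hlt⟩]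
      · simp [hi, hrow]
      · intro j _ hj
        have hj' : (j : ℕ) ≠ (i : ℕ) + 1 := fun hc => hj (Fin.ext hc)
        simp [hi, hj']
      · simp
end

section
/- Let λ₁, λ₂ : [0,1] → ℝ be continuously differentiable with λ₁, λ₂ > 0, set Λ(z) = diag(λ₁(z), −λ₂(z)), let Ã : [0,1] → ℝ^{2×2} be continuous with zero diagonal entries, let q₀ ≠ 0 be real, let c ∈ ℝⁿ, and let K : 𝒯 → ℝ^{2×2} be continuously differentiable on the triangle 𝒯 = {(z,ζ) : 0 ≤ ζ ≤ z ≤ 1} satisfying the kernel equations Λ(z) ∂_z K(z,ζ) + ∂_ζ(K(z,ζ) Λ(ζ)) = K(z,ζ) Ã(ζ) on 𝒯 together with the boundary conditions K₁₁(z,0) = (q₀ λ₂(0)/λ₁(0)) K₁₂(z,0), K₁₂(z,z) = −Ã₁₂(z)/(λ₁(z)+λ₂(z)), K₂₁(z,z) = Ã₂₁(z)/(λ₁(z)+λ₂(z)), and K₂₂(z,0) = (λ₁(0)/(q₀ λ₂(0))) K₂₁(z,0). Suppose x̃ : [0,1] × ℝ → ℝ² is continuously differentiable and ξ : ℝ →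 ℝⁿ is continuous, with ∂_t x̃(z,t) = Λ(z) ∂_z x̃(z,t) + Ã(z) x̃(z,t) on [0,1] × ℝ and x̃₂(0,t) = q₀ x̃₁(0,t) + cᵀ ξ(t) for all t. Then the function x̄(z,t) = x̃(z,t) − ∫₀^z K(z,ζ) x̃(ζ,t) dζ satisfies ∂_t x̄(z,t) = Λ(z) ∂_z x̄(z,t) + K(z,0) Λ(0) e₂ cᵀ ξ(t) for all (z,t) ∈ [0,1] × ℝ. -/
/-!
Differentiating `x̄(z,t) = x(z,t) - ∫₀ᶻ K(z,ζ) x(ζ,t) dζ` in `z` with the Leibniz rule on the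
triangle (`hasDerivWithinAt_triangle`) gives `x̄_z = x_z - K(z,z) x - ∫₀ᶻ K_z x`, and in `t`, under
the integral sign (`hasDerivAt_volterra_time`), `x̄_t = Λ x_z + A x - ∫₀ᶻ K (Λ x_z + A x)`.
By the kernel equation the last integrand equals `∂_ζ (K Λ x) + Λ(z) K_z x`, so that
(`integral_kernel_eq`)
`x̄_t = Λ x̄_z + (A + Λ K(z,z) - K(z,z) Λ) x(z,t) + K(z,0) Λ(0) x(0,t)`.
The commutator `Λ K - K Λ` is anti-diagonal and is cancelled by `A` through the conditions on the
diagonal `ζ = z`; the conditions on `ζ = 0` and the boundary condition for `x` reduce the last term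
to `K(z,0) Λ(0) e₂ cᵀ ξ(t)`.
-/

open Set Matrix

/-- The transport-velocity matrix `Λ(z) = diag(λ₁(z), -λ₂(z))`. -/
noncomputable def LamMat (lam1 lam2 : ℝ → ℝ) (z : ℝ) : Matrix (Fin 2) (Fin 2) ℝ :=
  !![lam1 z, 0; 0, -lam2 z]

/-- The Volterra integral transformation
`x̄(z,t) = x̃(z,t) - ∫₀^z K(z,ζ) x̃(ζ,t) dζ`. -/
noncomputable def volterraSub (K : ℝ → ℝ → Matrix (Fin 2) (Fin 2) ℝ)
    (x : ℝ → ℝ → Fin 2 → ℝ) (z t : ℝ) : Fin 2 → ℝ :=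
  x z t - ∫ ζ in (0:ℝ)..z, (K z ζ).mulVec (x ζ t)

section Leibniz

variable {E : Type*} [NormedAddCommGroup E] [NormedSpace ℝ E]

/-- Differentiation under the integral sign over a fixed interval; the domination comes from
compactness of `[x₀ - 1, x₀ + 1] × [a, b]`. -/
theorem hasDerivAt_paramIntegral {F F' : ℝ → ℝ → E}
    (hF : Continuous fun p : ℝ × ℝ => F p.1 p.2) (hF' : Continuous fun p : ℝ × ℝ => F' p.1 p.2)
    (hd : ∀ x s, HasDerivAt (fun y => F y s) (F' x s) x) (a b x₀ : ℝ) :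
    HasDerivAt (fun x => ∫ s in a..b, F x s) (∫ s in a..b, F' x₀ s) x₀ := by
  obtain ⟨C, hC⟩ := ((isCompact_Icc (a := x₀ - 1) (b := x₀ + 1)).prod
    (isCompact_uIcc (a := a) (b := b))).exists_bound_of_continuousOn hF'.continuousOn
  have hs : Icc (x₀ - 1) (x₀ + 1) ∈ nhds x₀ := Icc_mem_nhds (by linarith) (by linarith)
  have hcF : ∀ x, Continuous (F x) := fun x => hF.comp (Continuous.prodMk_right x)
  have hcF' : ∀ x, Continuous (F' x) := fun x => hF'.comp (Continuous.prodMk_right x)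
  refine (intervalIntegral.hasDerivAt_integral_of_dominated_loc_of_deriv_le (bound := fun _ => C)
    hs (.of_forall fun x => (hcF x).aestronglyMeasurable) ((hcF x₀).intervalIntegrable a b)
    (hcF' x₀).aestronglyMeasurable (.of_forall fun s hsab x hx => ?_) (by simp)
    (.of_forall fun s _ x _ => hd x s)).2
  exact hC (x, s) ⟨hx, uIoc_subset_uIcc hsab⟩

/-- The Leibniz rule with a moving endpoint, for an integrand defined on the whole plane: the chain
rule for `(a, b) ↦ ∫₀ᵃ F b s ds`, whose partial derivatives are continuous, along the diagonal. -/
theorem hasDerivAt_leibniz [CompleteSpace E] {F F' : ℝ → ℝ → E}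
    (hF : Continuous fun p : ℝ × ℝ => F p.1 p.2) (hF' : Continuous fun p : ℝ × ℝ => F' p.1 p.2)
    (hd : ∀ x s, HasDerivAt (fun y => F y s) (F' x s) x) (z : ℝ) :
    HasDerivAt (fun x => ∫ s in (0:ℝ)..x, F x s) (F z z + ∫ s in (0:ℝ)..z, F' z s) z := by
  have hcF : ∀ x, Continuous (F x) := fun x => hF.comp (Continuous.prodMk_right x)
  have c2 : Continuous fun p : ℝ × ℝ => ∫ s in (0:ℝ)..p.1, F' p.2 s := by
    apply intervalIntegral.continuous_parametric_intervalIntegral_of_continuous _ continuous_fst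
    exact hF'.comp (by fun_prop : Continuous fun q : (ℝ × ℝ) × ℝ => (q.1.2, q.2))
  have c1 : Continuous fun p : ℝ × ℝ => F p.2 p.1 := hF.comp continuous_swap
  let L : E →L[ℝ] (ℝ →L[ℝ] E) := ContinuousLinearMap.smulRightL ℝ ℝ E 1
  have key := hasStrictFDerivAt_uncurry_coprod (𝕜 := ℝ) (u := (z, z))
    (f := fun a b => ∫ s in (0:ℝ)..a, F b s)
    (f₁ := fun a b => L (F b a)) (f₂ := fun a b => L (∫ s in (0:ℝ)..a, F' b s))
    (.of_forall fun v => ((hcF v.2).integral_hasStrictDerivAt 0 v.1).hasDerivAt.hasFDerivAt)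
    (.of_forall fun v => (hasDerivAt_paramIntegral hF hF' hd 0 v.1 v.2).hasFDerivAt)
    (L.continuous.comp c1).continuousAt (L.continuous.comp c2).continuousAt
  have h2 : HasDerivAt (fun x : ℝ => (x, x)) ((1:ℝ), (1:ℝ)) z :=
    (hasDerivAt_id z).prodMk (hasDerivAt_id z)
  have := HasFDerivAt.comp_hasDerivAt z (f := fun x : ℝ => (x, x)) key.hasFDerivAt h2
  convert this using 1
  · rfl
  change _ = L (F z z) 1 + L (∫ s in (0:ℝ)..z, F' z s) 1
  simp [L]

/-- The Leibniz rule for an integrand that is only controlled on the triangle `0 ≤ s ≤ z ≤ 1`,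
with one-sided derivatives on its edges. The integrand is first extended to the plane: its
derivative by a retraction onto the triangle, the integrand itself by integrating that extension. -/
theorem hasDerivWithinAt_triangle [CompleteSpace E] {F F' : ℝ → ℝ → E}
    (hF : ContinuousOn (fun p : ℝ × ℝ => F p.1 p.2) {p : ℝ × ℝ | 0 ≤ p.2 ∧ p.2 ≤ p.1 ∧ p.1 ≤ 1})
    (hF' : ContinuousOn (fun p : ℝ × ℝ => F' p.1 p.2) {p : ℝ × ℝ | 0 ≤ p.2 ∧ p.2 ≤ p.1 ∧ p.1 ≤ 1})
    (hd : ∀ z s : ℝ, 0 ≤ s → s ≤ z → z ≤ 1 →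
      HasDerivWithinAt (fun y => F y s) (F' z s) (Icc s 1) z) {z : ℝ} (hz : z ∈ Icc (0:ℝ) 1) :
    HasDerivWithinAt (fun x => ∫ s in (0:ℝ)..x, F x s) (F z z + ∫ s in (0:ℝ)..z, F' z s)
      (Icc 0 1) z := by
  let π : ℝ → ℝ := fun s => max 0 (min s 1)
  have hπc : Continuous π := by fun_prop
  have hπ0 : ∀ s, 0 ≤ π s := fun s => le_max_left _ _
  have hπ1 : ∀ s, π s ≤ 1 := fun s => max_le zero_le_one (min_le_right _ _)
  have hπe : ∀ s, 0 ≤ s → s ≤ 1 → π s = s := fun s h0 h1 => by simp [π, h0, h1]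
  let G : ℝ → ℝ → E := fun y s => F' (max (π s) (min y 1)) (π s)
  have hG : Continuous fun p : ℝ × ℝ => G p.1 p.2 :=
    hF'.comp_continuous (f := fun p : ℝ × ℝ => (max (π p.2) (min p.1 1), π p.2)) (by fun_prop)
      fun p => ⟨hπ0 _, le_max_left _ _, max_le (hπ1 _) (min_le_right _ _)⟩
  have hGe : ∀ y s, 0 ≤ s → s ≤ y → y ≤ 1 → G y s = F' y s := fun y s h0 h1 h2 => by
    simp [G, hπe s h0 (h1.trans h2), h1, h2]
  have hGy : ∀ s, Continuous fun y => G y s := fun s => hG.comp (Continuous.prodMk_left s)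
  let Φ : ℝ → ℝ → E := fun y s => F (π s) (π s) + ∫ r in (π s)..y, G r s
  have hΦc : Continuous fun p : ℝ × ℝ => Φ p.1 p.2 := by
    refine .add (hF.comp_continuous (f := fun p : ℝ × ℝ => (π p.2, π p.2)) (by fun_prop)
      fun p => ⟨hπ0 _, le_rfl, hπ1 _⟩) ?_
    have : ∀ p : ℝ × ℝ, ∫ r in (π p.2)..p.1, G r p.2 =
        (∫ r in (0:ℝ)..p.1, G r p.2) - ∫ r in (0:ℝ)..(π p.2), G r p.2 := fun p =>
      (intervalIntegral.integral_interval_sub_left ((hGy _).intervalIntegrable _ _)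
        ((hGy _).intervalIntegrable _ _)).symm
    simp_rw [this]
    have hG2 : Continuous (Function.uncurry fun (p : ℝ × ℝ) r => G r p.2) :=
      hG.comp (by fun_prop : Continuous fun q : (ℝ × ℝ) × ℝ => (q.2, q.1.2))
    exact (intervalIntegral.continuous_parametric_intervalIntegral_of_continuous hG2
      continuous_fst).sub
      (intervalIntegral.continuous_parametric_intervalIntegral_of_continuous hG2
        (hπc.comp continuous_snd))
  have hΦd : ∀ y s, HasDerivAt (fun w => Φ w s) (G y s) y := fun y s =>
    ((hGy s).integral_hasStrictDerivAt (π s) y).hasDerivAt.const_add _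
  have hΦe : ∀ y s, 0 ≤ s → s ≤ y → y ≤ 1 → Φ y s = F y s := fun y s h0 h1 h2 => by
    have : ∫ r in s..y, G r s = F y s - F s s :=
      intervalIntegral.integral_eq_sub_of_hasDerivAt_of_le h1
        (fun r hr => ((hd r s h0 hr.1 (hr.2.trans h2)).mono
          (Icc_subset_Icc_right h2)).continuousWithinAt)
        (fun r hr => by
          rw [hGe r s h0 hr.1.le (hr.2.le.trans h2)]
          exact (hd r s h0 hr.1.le (hr.2.le.trans h2)).hasDerivAt
            (Icc_mem_nhds hr.1 (hr.2.trans_le h2)))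
        ((hGy s).intervalIntegrable _ _)
    simp [Φ, hπe s h0 (h1.trans h2), this]
  have hint : ∀ w ∈ Icc (0:ℝ) 1, ∫ s in (0:ℝ)..w, F w s = ∫ s in (0:ℝ)..w, Φ w s := fun w hw =>
    intervalIntegral.integral_congr fun s hs => by
      rw [uIcc_of_le hw.1] at hs
      exact (hΦe w s hs.1 hs.2 hw.2).symm
  have hint' : ∫ s in (0:ℝ)..z, F' z s = ∫ s in (0:ℝ)..z, G z s :=
    intervalIntegral.integral_congr fun s hs => by
      rw [uIcc_of_le hz.1] at hs
      exact (hGe z s hs.1 hs.2 hz.2).symm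
  rw [hint', ← hΦe z z hz.1 le_rfl hz.2]
  exact (hasDerivAt_leibniz hΦc hG hΦd z).hasDerivWithinAt.congr hint (hint z hz)

end Leibniz

theorem ContinuousOn.mulVec_two {X : Type*} [TopologicalSpace X]
    {M : X → Matrix (Fin 2) (Fin 2) ℝ} {v : X → Fin 2 → ℝ} {S : Set X}
    (hM : ∀ i j, ContinuousOn (fun x => M x i j) S) (hv : ContinuousOn v S) :
    ContinuousOn (fun x => M x *ᵥ v x) S := by
  refine continuousOn_pi.2 fun i => ?_
  simp only [mulVec, dotProduct]
  exact continuousOn_finsetSum _ fun j _ => (hM i j).mul (continuousOn_pi.1 hv j)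

theorem HasDerivWithinAt.mulVec_two {M : ℝ → Matrix (Fin 2) (Fin 2) ℝ}
    {M' : Matrix (Fin 2) (Fin 2) ℝ} {v : ℝ → Fin 2 → ℝ} {v' : Fin 2 → ℝ} {S : Set ℝ} {x : ℝ}
    (hM : ∀ i j, HasDerivWithinAt (fun x => M x i j) (M' i j) S x)
    (hv : HasDerivWithinAt v v' S x) :
    HasDerivWithinAt (fun x => M x *ᵥ v x) (M' *ᵥ v x + M x *ᵥ v') S x := by
  refine hasDerivWithinAt_pi.2 fun i => ?_
  simp only [mulVec, dotProduct, Pi.add_apply, ← Finset.sum_add_distrib]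
  exact HasDerivWithinAt.fun_sum fun j _ => (hM i j).mul (hasDerivWithinAt_pi.1 hv j)

/-- Time derivative of the Volterra integral: `W` is the time derivative of `x` and `M` is the
kernel row `K z ·`. -/
theorem hasDerivAt_volterra_time {M : ℝ → Matrix (Fin 2) (Fin 2) ℝ} {x W : ℝ → ℝ → Fin 2 → ℝ}
    {z : ℝ} (hz : z ∈ Icc (0:ℝ) 1)
    (hM : ∀ i j, ContinuousOn (fun ζ => M ζ i j) (Icc 0 z))
    (hx : ContinuousOn (fun p : ℝ × ℝ => x p.1 p.2) (Icc 0 1 ×ˢ univ))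
    (hW : ContinuousOn (fun p : ℝ × ℝ => W p.1 p.2) (Icc 0 1 ×ˢ univ))
    (hd : ∀ ζ ∈ Icc (0:ℝ) 1, ∀ t, HasDerivAt (fun t' => x ζ t') (W ζ t) t) (t : ℝ) :
    HasDerivAt (fun t' => ∫ ζ in (0:ℝ)..z, M ζ *ᵥ x ζ t') (∫ ζ in (0:ℝ)..z, M ζ *ᵥ W ζ t) t := by
  -- Clamping `ζ` to `[0, z]` makes the integrand continuous on the whole plane.
  let π : ℝ → ℝ := fun s => max 0 (min s z)
  have hπ : ∀ s, π s ∈ Icc 0 z := fun s => ⟨le_max_left _ _, max_le hz.1 (min_le_right _ _)⟩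
  have hπ1 : ∀ s, π s ∈ Icc (0:ℝ) 1 := fun s => Icc_subset_Icc_right hz.2 (hπ s)
  have hπe : ∀ s ∈ uIcc 0 z, π s = s := fun s hs => by
    rw [uIcc_of_le hz.1] at hs
    simp [π, hs.1, hs.2]
  have hcont : ∀ V : ℝ → ℝ → Fin 2 → ℝ,
      ContinuousOn (fun p : ℝ × ℝ => V p.1 p.2) (Icc 0 1 ×ˢ univ) →
      Continuous fun p : ℝ × ℝ => M (π p.2) *ᵥ V (π p.2) p.1 := fun V hV => by
    have hπ2 : Continuous fun p : ℝ × ℝ => π p.2 := by fun_prop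
    refine continuousOn_univ.1 (ContinuousOn.mulVec_two (fun i j => ?_) ?_)
    · exact ((hM i j).comp_continuous hπ2 fun p => hπ _).continuousOn
    · exact (hV.comp_continuous (hπ2.prodMk continuous_fst)
        fun p => ⟨hπ1 _, mem_univ _⟩).continuousOn
  have hmain := hasDerivAt_paramIntegral
    (F := fun t s => M (π s) *ᵥ x (π s) t) (F' := fun t s => M (π s) *ᵥ W (π s) t) (hcont x hx) (hcont W hW) (fun t s => by
    rw [← hasDerivWithinAt_univ]
    simpa only [zero_mulVec, zero_add] using
      HasDerivWithinAt.mulVec_two (S := univ) (M := fun _ => M (π s)) (M' := 0)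
      (fun i j => hasDerivWithinAt_const ..) (hd (π s) (hπ1 s) t).hasDerivWithinAt) 0 z t
  have hcongr : ∀ V : ℝ → ℝ → Fin 2 → ℝ, ∀ t, ∫ ζ in (0:ℝ)..z, M ζ *ᵥ V ζ t =
      ∫ ζ in (0:ℝ)..z, M (π ζ) *ᵥ V (π ζ) t := fun V t =>
    intervalIntegral.integral_congr fun s hs => by simp only [hπe s hs]
  simpa only [hcongr] using hmain

/-- Integration by parts combined with the kernel equation. Here `M`, `Mz` and `P'` stand for
`K z ·`, `∂_z K z ·` and `∂_ζ (K z · Λ)`, and `L₀` for `Λ z`. -/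
theorem integral_kernel_eq {M Mz P' L A : ℝ → Matrix (Fin 2) (Fin 2) ℝ}
    {L₀ : Matrix (Fin 2) (Fin 2) ℝ} {x x' : ℝ → Fin 2 → ℝ} {z : ℝ} (hz : 0 ≤ z)
    (hM : ∀ i j, ContinuousOn (fun ζ => M ζ i j) (Icc 0 z))
    (hL : ∀ i j, ContinuousOn (fun ζ => L ζ i j) (Icc 0 z))
    (hMz : ∀ i j, ContinuousOn (fun ζ => Mz ζ i j) (Icc 0 z))
    (hP' : ∀ i j, ContinuousOn (fun ζ => P' ζ i j) (Icc 0 z))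
    (hP : ∀ ζ ∈ Icc 0 z, ∀ i j,
      HasDerivWithinAt (fun ζ' => (M ζ' * L ζ') i j) (P' ζ i j) (Icc 0 z) ζ)
    (hx : ∀ ζ ∈ Icc 0 z, HasDerivWithinAt x (x' ζ) (Icc 0 z) ζ)
    (hx' : ContinuousOn x' (Icc 0 z))
    (hker : ∀ ζ ∈ Icc 0 z, L₀ * Mz ζ + P' ζ = M ζ * A ζ) :
    ∫ ζ in (0:ℝ)..z, M ζ *ᵥ (L ζ *ᵥ x' ζ + A ζ *ᵥ x ζ) =
      (M z * L z) *ᵥ x z - (M 0 * L 0) *ᵥ x 0 + L₀ *ᵥ ∫ ζ in (0:ℝ)..z, Mz ζ *ᵥ x ζ := by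
  have hxc : ContinuousOn x (Icc 0 z) := fun ζ hζ => (hx ζ hζ).continuousWithinAt
  have hd : ∀ ζ ∈ Icc 0 z, HasDerivWithinAt (fun ζ' => (M ζ' * L ζ') *ᵥ x ζ')
      (P' ζ *ᵥ x ζ + (M ζ * L ζ) *ᵥ x' ζ) (Icc 0 z) ζ := fun ζ hζ =>
    HasDerivWithinAt.mulVec_two (hP ζ hζ) (hx ζ hζ)
  have hi1 : IntervalIntegrable (fun ζ => P' ζ *ᵥ x ζ + (M ζ * L ζ) *ᵥ x' ζ)
      MeasureTheory.volume 0 z := by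
    refine ContinuousOn.intervalIntegrable_of_Icc hz ((ContinuousOn.mulVec_two hP' hxc).add ?_)
    simp only [← mulVec_mulVec]
    exact ContinuousOn.mulVec_two hM (ContinuousOn.mulVec_two hL hx')
  have hi2 : IntervalIntegrable (fun ζ => Mz ζ *ᵥ x ζ) MeasureTheory.volume 0 z :=
    ContinuousOn.intervalIntegrable_of_Icc hz (ContinuousOn.mulVec_two hMz hxc)
  let T : (Fin 2 → ℝ) →L[ℝ] (Fin 2 → ℝ) := LinearMap.toContinuousLinearMap (mulVecLin L₀)
  have hT : ∀ v, T v = L₀ *ᵥ v := fun v => rfl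
  have hi3 : IntervalIntegrable (fun ζ => T (Mz ζ *ᵥ x ζ)) MeasureTheory.volume 0 z :=
    ContinuousOn.intervalIntegrable_of_Icc hz
      (T.continuous.comp_continuousOn (ContinuousOn.mulVec_two hMz hxc))
  have hftc := intervalIntegral.integral_eq_sub_of_hasDerivAt_of_le hz
    (fun ζ hζ => (hd ζ hζ).continuousWithinAt)
    (fun ζ hζ => (hd ζ (Ioo_subset_Icc_self hζ)).hasDerivAt (Icc_mem_nhds hζ.1 hζ.2)) hi1
  rw [← hftc, ← hT, ← T.intervalIntegral_comp_comm hi2,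
    ← intervalIntegral.integral_add hi1 hi3]
  refine intervalIntegral.integral_congr fun ζ hζ => ?_
  rw [uIcc_of_le hz] at hζ
  simp only [hT, mulVec_add, mulVec_mulVec, ← hker ζ hζ, add_mulVec]
  abel

/-- If the kernel `K` solves the kernel equations with the stated
boundary conditions on the triangle, then the Volterra transformation
`x̄(z,t) = x̃(z,t) - ∫₀^z K(z,ζ) x̃(ζ,t) dζ` maps the anti-diagonally coupled
hyperbolic system (with ODE-dependent boundary condition at `z = 0`) into
`∂_t x̄ = Λ(z) ∂_z x̄ + K(z,0) Λ(0) e₂ cᵀ ξ(t)`. -/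
theorem stmt_11 (n : ℕ)
    (lam1 lam2 dlam1 dlam2 : ℝ → ℝ)
    (hl1p : ∀ z ∈ Icc (0:ℝ) 1, 0 < lam1 z) (hl2p : ∀ z ∈ Icc (0:ℝ) 1, 0 < lam2 z)
    (hl1d : ∀ z ∈ Icc (0:ℝ) 1, HasDerivWithinAt lam1 (dlam1 z) (Icc 0 1) z)
    (hl2d : ∀ z ∈ Icc (0:ℝ) 1, HasDerivWithinAt lam2 (dlam2 z) (Icc 0 1) z)
    (hl1dc : ContinuousOn dlam1 (Icc 0 1)) (hl2dc : ContinuousOn dlam2 (Icc 0 1))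
    (At : ℝ → Matrix (Fin 2) (Fin 2) ℝ)
    (hAtc : ∀ i j : Fin 2, ContinuousOn (fun z => At z i j) (Icc 0 1))
    (hAtdiag : ∀ z ∈ Icc (0:ℝ) 1, At z 0 0 = 0 ∧ At z 1 1 = 0)
    (q₀ : ℝ) (hq₀ : q₀ ≠ 0) (c : Fin n → ℝ)
    (K Kz dKL : ℝ → ℝ → Matrix (Fin 2) (Fin 2) ℝ)
    (hKz : ∀ z ζ : ℝ, 0 ≤ ζ → ζ ≤ z → z ≤ 1 → ∀ i j : Fin 2,
      HasDerivWithinAt (fun z' => K z' ζ i j) (Kz z ζ i j) (Icc ζ 1) z)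
    (hKL : ∀ z ζ : ℝ, 0 ≤ ζ → ζ ≤ z → z ≤ 1 → ∀ i j : Fin 2,
      HasDerivWithinAt (fun ζ' => (K z ζ' * LamMat lam1 lam2 ζ') i j)
        (dKL z ζ i j) (Icc 0 z) ζ)
    (hker : ∀ z ζ : ℝ, 0 ≤ ζ → ζ ≤ z → z ≤ 1 →
      LamMat lam1 lam2 z * Kz z ζ + dKL z ζ = K z ζ * At ζ)
    (hbc11 : ∀ z ∈ Icc (0:ℝ) 1, K z 0 0 0 = q₀ * lam2 0 / lam1 0 * K z 0 0 1)
    (hbc12 : ∀ z ∈ Icc (0:ℝ) 1, K z z 0 1 = -At z 0 1 / (lam1 z + lam2 z))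
    (hbc21 : ∀ z ∈ Icc (0:ℝ) 1, K z z 1 0 = At z 1 0 / (lam1 z + lam2 z))
    (hbc22 : ∀ z ∈ Icc (0:ℝ) 1, K z 0 1 1 = lam1 0 / (q₀ * lam2 0) * K z 0 1 0)
    (hKc : ∀ i j : Fin 2, ContinuousOn (fun p : ℝ × ℝ => K p.1 p.2 i j)
      {p : ℝ × ℝ | 0 ≤ p.2 ∧ p.2 ≤ p.1 ∧ p.1 ≤ 1})
    (hKzc : ∀ i j : Fin 2, ContinuousOn (fun p : ℝ × ℝ => Kz p.1 p.2 i j)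
      {p : ℝ × ℝ | 0 ≤ p.2 ∧ p.2 ≤ p.1 ∧ p.1 ≤ 1})
    (hdKLc : ∀ i j : Fin 2, ContinuousOn (fun p : ℝ × ℝ => dKL p.1 p.2 i j)
      {p : ℝ × ℝ | 0 ≤ p.2 ∧ p.2 ≤ p.1 ∧ p.1 ≤ 1})
    (xt xz : ℝ → ℝ → Fin 2 → ℝ) (ξ : ℝ → Fin n → ℝ) (hξ : Continuous ξ)
    (hxz : ∀ t : ℝ, ∀ z ∈ Icc (0:ℝ) 1,
      HasDerivWithinAt (fun z' => xt z' t) (xz z t) (Icc 0 1) z)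
    (hxt : ∀ z ∈ Icc (0:ℝ) 1, ∀ t : ℝ, HasDerivAt (fun t' => xt z t')
      ((LamMat lam1 lam2 z).mulVec (xz z t) + (At z).mulVec (xt z t)) t)
    (hxc : ContinuousOn (fun p : ℝ × ℝ => xt p.1 p.2) (Icc 0 1 ×ˢ univ))
    (hxzc : ContinuousOn (fun p : ℝ × ℝ => xz p.1 p.2) (Icc 0 1 ×ˢ univ))
    (hbc0 : ∀ t : ℝ, xt 0 t 1 = q₀ * xt 0 t 0 + c ⬝ᵥ ξ t) :
    ∃ xbz : ℝ → ℝ → Fin 2 → ℝ, ∀ z ∈ Icc (0:ℝ) 1, ∀ t : ℝ,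
      HasDerivWithinAt (fun z' => volterraSub K xt z' t) (xbz z t) (Icc 0 1) z ∧
      HasDerivAt (fun t' => volterraSub K xt z t')
        ((LamMat lam1 lam2 z).mulVec (xbz z t) +
          (c ⬝ᵥ ξ t) • ((K z 0 * LamMat lam1 lam2 0).mulVec (Pi.single 1 1))) t := by
  have hlamc : ∀ i j, ContinuousOn (fun z => LamMat lam1 lam2 z i j) (Icc 0 1) := by
    have h1 : ContinuousOn lam1 (Icc 0 1) := fun z hz => (hl1d z hz).continuousWithinAt
    have h2 : ContinuousOn lam2 (Icc 0 1) := fun z hz => (hl2d z hz).continuousWithinAt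
    intro i j
    fin_cases i <;> fin_cases j <;> simp [LamMat] <;> fun_prop
  have hfst : MapsTo (fun p : ℝ × ℝ => p.1) (Icc (0:ℝ) 1 ×ˢ (univ : Set ℝ)) (Icc 0 1) :=
    fun p hp => hp.1
  have hWc : ContinuousOn (fun p : ℝ × ℝ => LamMat lam1 lam2 p.1 *ᵥ xz p.1 p.2 +
      At p.1 *ᵥ xt p.1 p.2) (Icc 0 1 ×ˢ univ) :=
    (ContinuousOn.mulVec_two (fun i j => (hlamc i j).comp continuousOn_fst hfst) hxzc).add
      (ContinuousOn.mulVec_two (fun i j => (hAtc i j).comp continuousOn_fst hfst) hxc)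
  refine ⟨fun z t => xz z t - (K z z *ᵥ xt z t + ∫ ζ in (0:ℝ)..z, Kz z ζ *ᵥ xt ζ t),
    fun z hz t => ⟨?_, ?_⟩⟩
  · have hxT : ContinuousOn (fun p : ℝ × ℝ => xt p.2 t)
        {p : ℝ × ℝ | 0 ≤ p.2 ∧ p.2 ≤ p.1 ∧ p.1 ≤ 1} :=
      hxc.comp (f := fun p : ℝ × ℝ => (p.2, t)) (by fun_prop)
        fun p hp => ⟨⟨hp.1, hp.2.1.trans hp.2.2⟩, mem_univ _⟩
    refine (hxz t z hz).sub (hasDerivWithinAt_triangle (F := fun z ζ => K z ζ *ᵥ xt ζ t)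
      (F' := fun z ζ => Kz z ζ *ᵥ xt ζ t) (ContinuousOn.mulVec_two hKc hxT)
      (ContinuousOn.mulVec_two hKzc hxT) (fun z s h0 h1 h2 => ?_) hz)
    simpa using HasDerivWithinAt.mulVec_two (hKz z s h0 h1 h2)
      (hasDerivWithinAt_const z (Icc s 1) (xt s t))
  · have hrow : ∀ Q : ℝ → ℝ → Matrix (Fin 2) (Fin 2) ℝ,
        (∀ i j : Fin 2, ContinuousOn (fun p : ℝ × ℝ => Q p.1 p.2 i j)
          {p : ℝ × ℝ | 0 ≤ p.2 ∧ p.2 ≤ p.1 ∧ p.1 ≤ 1}) →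
        ∀ i j : Fin 2, ContinuousOn (fun ζ => Q z ζ i j) (Icc 0 z) := fun Q hQ i j =>
      (hQ i j).comp (f := fun ζ => (z, ζ)) (by fun_prop) fun ζ hζ => ⟨hζ.1, hζ.2, hz.2⟩
    have hsub : Icc 0 z ⊆ Icc (0:ℝ) 1 := Icc_subset_Icc_right hz.2
    have htime := (hxt z hz t).sub (hasDerivAt_volterra_time
      (W := fun z t => LamMat lam1 lam2 z *ᵥ xz z t + At z *ᵥ xt z t) hz (hrow K hKc) hxc hWc hxt t)
    have hparts := integral_kernel_eq (M := K z) (Mz := Kz z) (P' := dKL z)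
      (L := LamMat lam1 lam2) (A := At) (L₀ := LamMat lam1 lam2 z) (x := fun ζ => xt ζ t)
      (x' := fun ζ => xz ζ t) hz.1 (hrow K hKc) (fun i j => (hlamc i j).mono hsub)
      (hrow Kz hKzc) (hrow dKL hdKLc) (fun ζ hζ => hKL z ζ hζ.1 hζ.2 hz.2)
      (fun ζ hζ => (hxz t ζ (hsub hζ)).mono hsub)
      (hxzc.comp (f := fun ζ => (ζ, t)) (by fun_prop) fun ζ hζ => ⟨hsub hζ, mem_univ _⟩)
      (fun ζ hζ => hker z ζ hζ.1 hζ.2 hz.2)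
    rw [hparts] at htime
    refine htime.congr_deriv ?_
    beta_reduce
    generalize (∫ ζ in (0:ℝ)..z, Kz z ζ *ᵥ xt ζ t) = I
    have hs : lam1 z + lam2 z ≠ 0 := (add_pos (hl1p z hz) (hl2p z hz)).ne'
    have h0 : (0:ℝ) ∈ Icc (0:ℝ) 1 := ⟨le_rfl, zero_le_one⟩
    have hp1 : lam1 0 ≠ 0 := (hl1p 0 h0).ne'
    have hp2 : lam2 0 ≠ 0 := (hl2p 0 h0).ne'
    have e12 : K z z 0 1 * (lam1 z + lam2 z) = -At z 0 1 := by
      rw [hbc12 z hz, div_mul_cancel₀ _ hs]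
    have e21 : K z z 1 0 * (lam1 z + lam2 z) = At z 1 0 := by
      rw [hbc21 z hz, div_mul_cancel₀ _ hs]
    have e11 : K z 0 0 0 * lam1 0 = q₀ * lam2 0 * K z 0 0 1 := by
      rw [hbc11 z hz]; field_simp
    have e22 : K z 0 1 1 * (q₀ * lam2 0) = lam1 0 * K z 0 1 0 := by
      rw [hbc22 z hz]; field_simp
    obtain ⟨a1, a2⟩ := hAtdiag z hz
    have hb := hbc0 t
    generalize c ⬝ᵥ ξ t = γ at hb ⊢
    ext i
    fin_cases i
    · simp [LamMat, vecHead, vecTail, Matrix.mul_apply, Fin.sum_univ_two, a1, hb]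
      linear_combination xt z t 1 * e12 + xt 0 t 0 * e11
    · simp [LamMat, vecHead, vecTail, Matrix.mul_apply, Fin.sum_univ_two, a2, hb]
      linear_combination (-xt z t 0) * e21 - xt 0 t 0 * e22
end

section
/- Let λ₁, λ₂ : [0,1] → ℝ be continuous with λ₁, λ₂ > 0, set Λ(z) = diag(λ₁(z), −λ₂(z)), let C : [0,1] → ℝ^{2×n} be continuous, let F ∈ ℝ^{n×n}, b, k, c ∈ ℝⁿ and q₀ ∈ ℝ. Let N : [0,1] → ℝ^{2×n} be continuously differentiable with Λ(z) N'(z) = N(z)(F + b kᵀ) − C(z) for all z ∈ [0,1] and N(0) = [kᵀ; cᵀ + q₀ kᵀ] (rows). Suppose e_ξ : ℝ → ℝⁿ is differentiable and ε : [0,1] × ℝ → ℝ² is continuously differentiable with e_ξ'(t) = F e_ξ(t) + b ε₁(0,t), ε₂(0,t) = q₀ ε₁(0,t) + cᵀ e_ξ(t), and ∂_t ε(z,t) = Λ(z) ∂_z ε(z,t) + C(z) e_ξ(t) for all (z,t). Then ε̃(z,t) = ε(z,t) − N(z) e_ξ(t) satisfies e_ξ'(t) = (F + b kᵀ) e_ξ(t)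 + b ε̃₁(0,t), ε̃₂(0,t) = q₀ ε̃₁(0,t), and ∂_t ε̃(z,t) = Λ(z) ∂_z ε̃(z,t) − N(z) b ε̃₁(0,t) for all (z,t). -/
/-!
The ODE and the boundary condition follow from the rows of `N(0)`, which give
`ε̃₁(0,t) = ε₁(0,t) - kᵀ e_ξ(t)`. For the PDE, differentiate `N(z) e_ξ(t)` in `t` using the
ODE; the terms in `e_ξ` cancel because `Λ N' = N (F + b kᵀ) - C`, and what remains is
`-N(z) b (ε₁(0,t) - kᵀ e_ξ(t))`.
-/

open Set Matrix

/-- The backstepping (decoupling) transformation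
`ε̃(z,t) = ε(z,t) - N(z) e_ξ(t)`, with `N` solving the decoupling IVP, maps the
PDE-ODE error system into the form with stabilized ODE
`e_ξ' = (F + b kᵀ) e_ξ + b ε̃₁(0,·)`, boundary condition `ε̃₂(0,·) = q₀ ε̃₁(0,·)`,
and PDE `∂_t ε̃ = Λ ∂_z ε̃ - N(z) b ε̃₁(0,·)`. -/
theorem stmt_12 (n : ℕ) (lam1 lam2 : ℝ → ℝ)
    (hl1c : ContinuousOn lam1 (Icc 0 1)) (hl2c : ContinuousOn lam2 (Icc 0 1))
    (hl1p : ∀ z ∈ Icc (0:ℝ) 1, 0 < lam1 z) (hl2p : ∀ z ∈ Icc (0:ℝ) 1, 0 < lam2 z)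
    (C : ℝ → Matrix (Fin 2) (Fin n) ℝ)
    (hC : ∀ (i : Fin 2) (j : Fin n), ContinuousOn (fun z => C z i j) (Icc 0 1))
    (F : Matrix (Fin n) (Fin n) ℝ) (b k c : Fin n → ℝ) (q₀ : ℝ)
    (N dN : ℝ → Matrix (Fin 2) (Fin n) ℝ)
    (hNd : ∀ z ∈ Icc (0:ℝ) 1, ∀ (i : Fin 2) (j : Fin n),
      HasDerivWithinAt (fun z' => N z' i j) (dN z i j) (Icc 0 1) z)
    (hNeq : ∀ z ∈ Icc (0:ℝ) 1,
      LamMat lam1 lam2 z * dN z = N z * (F + Matrix.vecMulVec b k) - C z)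
    (hN00 : N 0 0 = k) (hN01 : N 0 1 = c + q₀ • k)
    (eξ : ℝ → Fin n → ℝ) (ε εz : ℝ → ℝ → Fin 2 → ℝ)
    (heξ : ∀ t : ℝ, HasDerivAt eξ (F.mulVec (eξ t) + ε 0 t 0 • b) t)
    (hbc0 : ∀ t : ℝ, ε 0 t 1 = q₀ * ε 0 t 0 + c ⬝ᵥ eξ t)
    (hεz : ∀ t : ℝ, ∀ z ∈ Icc (0:ℝ) 1,
      HasDerivWithinAt (fun z' => ε z' t) (εz z t) (Icc 0 1) z)
    (hεt : ∀ z ∈ Icc (0:ℝ) 1, ∀ t : ℝ, HasDerivAt (fun t' => ε z t')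
      ((LamMat lam1 lam2 z).mulVec (εz z t) + (C z).mulVec (eξ t)) t) :
    (∀ t : ℝ, HasDerivAt eξ
      ((F + Matrix.vecMulVec b k).mulVec (eξ t) +
        (ε 0 t 0 - (N 0).mulVec (eξ t) 0) • b) t) ∧
    (∀ t : ℝ, ε 0 t 1 - (N 0).mulVec (eξ t) 1 =
      q₀ * (ε 0 t 0 - (N 0).mulVec (eξ t) 0)) ∧
    (∀ z ∈ Icc (0:ℝ) 1, ∀ t : ℝ,
      HasDerivWithinAt (fun z' => ε z' t - (N z').mulVec (eξ t))
        (εz z t - (dN z).mulVec (eξ t)) (Icc 0 1) z ∧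
      HasDerivAt (fun t' => ε z t' - (N z).mulVec (eξ t'))
        ((LamMat lam1 lam2 z).mulVec (εz z t - (dN z).mulVec (eξ t)) -
          (ε 0 t 0 - (N 0).mulVec (eξ t) 0) • ((N z).mulVec b)) t) := by
  -- the rank-one feedback term: `(b kᵀ) v = (kᵀ v) b`
  have hbk : ∀ v : Fin n → ℝ, (Matrix.vecMulVec b k).mulVec v = (k ⬝ᵥ v) • b := by
    intro v
    ext i
    simp [Matrix.vecMulVec_mulVec, mul_comm]
  have h0 : ∀ t, (N 0).mulVec (eξ t) 0 = k ⬝ᵥ eξ t := fun t => by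
    simp only [Matrix.mulVec, hN00]
  have h1 : ∀ t, (N 0).mulVec (eξ t) 1 = c ⬝ᵥ eξ t + q₀ * (k ⬝ᵥ eξ t) := fun t => by
    simp only [Matrix.mulVec, hN01, add_dotProduct, smul_dotProduct, smul_eq_mul]
  refine ⟨fun t => ?_, fun t => ?_, fun z hz t => ⟨?_, ?_⟩⟩
  · convert heξ t using 1
    rw [h0, Matrix.add_mulVec, hbk]
    module
  · rw [h0, h1, hbc0]
    ring
  · refine (hεz t z hz).sub ?_
    rw [hasDerivWithinAt_pi]
    intro i
    simp only [Matrix.mulVec, dotProduct]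
    exact HasDerivWithinAt.fun_sum fun j _ => (hNd z hz i j).mul_const _
  · have hNe : HasDerivAt (fun t' => (N z).mulVec (eξ t'))
        ((N z).mulVec (F.mulVec (eξ t) + ε 0 t 0 • b)) t :=
      ((N z).mulVecLin.toContinuousLinearMap.hasFDerivAt).comp_hasDerivAt t (heξ t)
    -- the decoupling equation for `N` applied to `e_ξ(t)`
    have hdec : (LamMat lam1 lam2 z).mulVec ((dN z).mulVec (eξ t)) =
        (N z).mulVec (F.mulVec (eξ t)) + (k ⬝ᵥ eξ t) • (N z).mulVec b
          - (C z).mulVec (eξ t) := by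
      rw [Matrix.mulVec_mulVec, hNeq z hz, Matrix.sub_mulVec, ← Matrix.mulVec_mulVec,
        Matrix.add_mulVec, hbk, Matrix.mulVec_add, Matrix.mulVec_smul]
    refine ((hεt z hz t).fun_sub hNe).congr_deriv ?_
    rw [h0, Matrix.mulVec_sub, hdec, Matrix.mulVec_add, Matrix.mulVec_smul]
    module
end

section
/- Let λ : [0,1] → ℝ be continuous with λ > 0, define φ(z) = ∫₀^z dζ/λ(ζ) and let ψ : [0, φ(1)] → [0,1] denote the inverse of φ. Let p : [0, φ(1)] → ℝ be continuously differentiable, and define P(z,ζ) = p(φ(z) − φ(ζ)) / λ(ζ) on the triangle 𝒯 = {(z,ζ) : 0 ≤ ζ ≤ z ≤ 1}. Then: (i) λ(z) ∂_z P(z,ζ) + ∂_ζ (P(z,ζ) λ(ζ)) = 0 for all (z,ζ) ∈ 𝒯 with ζ < z; (ii) P(z,z) = p(0)/λ(z) for all z; and (iii) if additionally v : [0,1] → ℝ is continuous and p satisfies the Volterra integral equation ∫₀^τ v(ψ(τ−σ)) p(σ) dσ + p(τ) = v(ψ(τ)) for all τ ∈ [0, φ(1)], then P(z,0) λ(0)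 + ∫₀^z P(z,ζ) v(ζ) dζ = v(z) for all z ∈ [0,1]. -/
/-!
The transport time `φ` satisfies `φ' = 1/λ > 0` on `[0,1]` and vanishes at `0`
(`transportTime_hasDerivWithinAt`, `transportTime_monotoneOn`), so `φ(z) - φ(ζ)` stays in
`[0, φ(1)]` on the triangle. The transport equation is then the chain rule:
`λ(z) ∂_z P = p'(φ(z) - φ(ζ)) / λ(ζ)`, while `P λ = p(φ(z) - φ(ζ))` has `ζ`-derivative
`-p'(φ(z) - φ(ζ)) / λ(ζ)`. The boundary condition at `ζ = 0` is the Volterra equation at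
`τ = φ(z)` after the substitution `σ = φ(z) - φ(ζ)`, which maps `[0,z]` injectively onto
`[0, φ(z)]` and under which `ψ(τ - σ) = ζ`. The change of variables for injective maps asks no
regularity of the integrand, so continuity of `ψ` is never needed.
-/

open Set

/-- The transport time `φ(z) = ∫₀^z dζ/λ(ζ)`. -/
noncomputable def transportTime (lam : ℝ → ℝ) (z : ℝ) : ℝ :=
  ∫ ζ in (0:ℝ)..z, (lam ζ)⁻¹

/-- The kernel ansatz `P(z,ζ) = p(φ(z) - φ(ζ)) / λ(ζ)`. -/
noncomputable def Pker (lam p : ℝ → ℝ) (z ζ : ℝ) : ℝ :=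
  p (transportTime lam z - transportTime lam ζ) / lam ζ

theorem transportTime_hasDerivWithinAt {lam : ℝ → ℝ} (hc : ContinuousOn lam (Icc 0 1))
    (hpos : ∀ z ∈ Icc (0:ℝ) 1, 0 < lam z) {z : ℝ} (hz : z ∈ Icc (0:ℝ) 1) :
    HasDerivWithinAt (transportTime lam) (lam z)⁻¹ (Icc 0 1) z := by
  -- Replacing `1/λ` by its continuous extension from `[0,1]` does not change `φ` on `[0,1]`.
  set g : ℝ → ℝ := IccExtend (zero_le_one' ℝ) ((Icc (0:ℝ) 1).domRestrict fun x => (lam x)⁻¹) with hg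
  have hgc : Continuous g :=
    (continuousOn_iff_continuous_domRestrict.1
      (hc.inv₀ fun x hx => (hpos x hx).ne')).Icc_extend'
  have hgeq : ∀ x ∈ Icc (0:ℝ) 1, g x = (lam x)⁻¹ := fun x hx => by
    rw [hg, IccExtend_of_mem _ _ hx]; rfl
  have hφ : ∀ y ∈ Icc (0:ℝ) 1, transportTime lam y = ∫ x in (0:ℝ)..y, g x := by
    intro y hy
    refine intervalIntegral.integral_congr fun x hx => ?_
    rw [uIcc_of_le hy.1] at hx
    exact (hgeq x ⟨hx.1, hx.2.trans hy.2⟩).symm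
  have h := (hgc.integral_hasStrictDerivAt 0 z).hasDerivAt.hasDerivWithinAt (s := Icc (0:ℝ) 1)
  rw [hgeq z hz] at h
  exact h.congr hφ (hφ z hz)

theorem transportTime_zero (lam : ℝ → ℝ) : transportTime lam 0 = 0 := by
  simp [transportTime]

theorem transportTime_monotoneOn {lam : ℝ → ℝ} (hc : ContinuousOn lam (Icc 0 1))
    (hpos : ∀ z ∈ Icc (0:ℝ) 1, 0 < lam z) : MonotoneOn (transportTime lam) (Icc 0 1) := by
  refine monotoneOn_of_hasDerivWithinAt_nonneg (f' := fun x => (lam x)⁻¹) (convex_Icc 0 1)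
    (fun x hx => (transportTime_hasDerivWithinAt hc hpos hx).continuousWithinAt) ?_ ?_
  · intro x hx
    exact (transportTime_hasDerivWithinAt hc hpos (interior_subset hx)).mono interior_subset
  · intro x hx
    exact (inv_pos.2 (hpos x (interior_subset hx))).le

/-- The ansatz `P(z,ζ) = p(φ(z)-φ(ζ))/λ(ζ)` solves the scalar
transport kernel equation `λ(z) ∂_z P + ∂_ζ(P λ) = 0` with `P(z,z) = p(0)/λ(z)`,
and if `p` solves the Volterra equation `∫₀^τ v(ψ(τ-σ)) p(σ) dσ + p(τ) = v(ψ(τ))`,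
then `P(z,0) λ(0) + ∫₀^z P(z,ζ) v(ζ) dζ = v(z)` on `[0,1]`. -/
theorem stmt_14 (lam : ℝ → ℝ)
    (hlamc : ContinuousOn lam (Icc 0 1))
    (hlamp : ∀ z ∈ Icc (0:ℝ) 1, 0 < lam z)
    (ψ : ℝ → ℝ) (hψ : ∀ z ∈ Icc (0:ℝ) 1, ψ (transportTime lam z) = z)
    (p dp : ℝ → ℝ)
    (hp : ∀ τ ∈ Icc (0:ℝ) (transportTime lam 1),
      HasDerivWithinAt p (dp τ) (Icc 0 (transportTime lam 1)) τ)
    (hdp : ContinuousOn dp (Icc 0 (transportTime lam 1))) :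
    (∀ z ζ : ℝ, 0 ≤ ζ → ζ < z → z ≤ 1 →
      ∃ Pz PL : ℝ,
        HasDerivWithinAt (fun z' => Pker lam p z' ζ) Pz (Icc ζ 1) z ∧
        HasDerivWithinAt (fun ζ' => Pker lam p z ζ' * lam ζ') PL (Icc 0 z) ζ ∧
        lam z * Pz + PL = 0) ∧
    (∀ z ∈ Icc (0:ℝ) 1, Pker lam p z z = p 0 / lam z) ∧
    (∀ v : ℝ → ℝ, ContinuousOn v (Icc 0 1) →
      (∀ τ ∈ Icc (0:ℝ) (transportTime lam 1),
        (∫ σ in (0:ℝ)..τ, v (ψ (τ - σ)) * p σ) + p τ = v (ψ τ)) →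
      ∀ z ∈ Icc (0:ℝ) 1,
        Pker lam p z 0 * lam 0 + (∫ ζ in (0:ℝ)..z, Pker lam p z ζ * v ζ) = v z) := by
  have hD := fun {z : ℝ} (hz : z ∈ Icc (0:ℝ) 1) => transportTime_hasDerivWithinAt hlamc hlamp hz
  have hM := transportTime_monotoneOn hlamc hlamp
  have h0 := transportTime_zero lam
  have hmem : ∀ z ζ : ℝ, 0 ≤ ζ → ζ ≤ z → z ≤ 1 →
      transportTime lam z - transportTime lam ζ ∈ Icc 0 (transportTime lam 1) := by
    intro z ζ h1 h2 h3
    have a := hM ⟨h1, h2.trans h3⟩ ⟨h1.trans h2, h3⟩ h2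
    have b := hM ⟨h1.trans h2, h3⟩ ⟨zero_le_one, le_rfl⟩ h3
    have c := hM ⟨le_rfl, zero_le_one⟩ ⟨h1, h2.trans h3⟩ h1
    constructor <;> linarith
  refine ⟨?_, ?_, ?_⟩
  · intro z ζ hζ hlt hz
    have hzm : z ∈ Icc (0:ℝ) 1 := ⟨hζ.trans hlt.le, hz⟩
    have hζm : ζ ∈ Icc (0:ℝ) 1 := ⟨hζ, hlt.le.trans hz⟩
    have hpd := hp _ (hmem z ζ hζ hlt.le hz)
    refine ⟨dp (transportTime lam z - transportTime lam ζ) * (lam z)⁻¹ / lam ζ,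
      dp (transportTime lam z - transportTime lam ζ) * (-(lam ζ)⁻¹), ?_, ?_, ?_⟩
    · have h1 : HasDerivWithinAt (fun z' => transportTime lam z' - transportTime lam ζ)
          (lam z)⁻¹ (Icc ζ 1) z :=
        ((hD hzm).mono (Icc_subset_Icc_left hζ)).sub_const _
      exact (hpd.comp z h1 fun x hx => hmem x ζ hζ hx.1 hx.2).div_const _
    · have h1 : HasDerivWithinAt (fun ζ' => transportTime lam z - transportTime lam ζ')
          (-(lam ζ)⁻¹) (Icc 0 z) ζ :=
        ((hD hζm).mono (Icc_subset_Icc_right hz)).const_sub _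
      refine (hpd.comp ζ h1 fun x hx => hmem z x hx.1 hx.2 hz).congr_of_mem (fun x hx => ?_)
        ⟨hζ, hlt.le⟩
      exact div_mul_cancel₀ _ (hlamp x ⟨hx.1, hx.2.trans hz⟩).ne'
    · have := (hlamp z hzm).ne'
      have := (hlamp ζ hζm).ne'
      field_simp
      ring
  · intro z _
    simp [Pker]
  · intro v _ hV z hz
    have hτ := hmem z 0 le_rfl hz.1 hz.2
    rw [h0, sub_zero] at hτ
    have hV := hV _ hτ
    rw [hψ z hz] at hV
    have hsub : Icc 0 z ⊆ Icc (0:ℝ) 1 := Icc_subset_Icc_right hz.2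
    have hder : ∀ x ∈ Icc 0 z, HasDerivWithinAt
        (fun ζ => transportTime lam z - transportTime lam ζ) (-(lam x)⁻¹) (Icc 0 z) x :=
      fun x hx => ((hD (hsub hx)).mono hsub).const_sub _
    have hinj : InjOn (fun ζ => transportTime lam z - transportTime lam ζ) (Icc 0 z) := by
      intro x hx y hy hxy
      have : transportTime lam x = transportTime lam y := sub_right_injective hxy
      rw [← hψ x (hsub hx), ← hψ y (hsub hy), this]
    have himg : (fun ζ => transportTime lam z - transportTime lam ζ) '' Icc 0 z
        = Icc 0 (transportTime lam z) := by
      apply Subset.antisymm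
      · rintro _ ⟨x, hx, rfl⟩
        have a := hM (hsub hx) hz hx.2
        have b := hM ⟨le_rfl, zero_le_one⟩ (hsub hx) hx.1
        constructor <;> dsimp only <;> linarith
      · have := intermediate_value_Icc' hz.1 fun x hx => (hder x hx).continuousWithinAt
        simpa only [h0, sub_zero, sub_self] using this
    have hcv := MeasureTheory.integral_image_eq_integral_abs_deriv_smul measurableSet_Icc hder hinj
      (fun σ => v (ψ (transportTime lam z - σ)) * p σ)
    rw [himg] at hcv
    have hint : (∫ ζ in (0:ℝ)..z, Pker lam p z ζ * v ζ)
        = ∫ σ in (0:ℝ)..transportTime lam z, v (ψ (transportTime lam z - σ)) * p σ := by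
      rw [intervalIntegral.integral_of_le hz.1, intervalIntegral.integral_of_le hτ.1,
        ← MeasureTheory.integral_Icc_eq_integral_Ioc,
        ← MeasureTheory.integral_Icc_eq_integral_Ioc, hcv]
      refine MeasureTheory.setIntegral_congr_fun measurableSet_Icc fun x hx => ?_
      rw [abs_neg, abs_of_pos (inv_pos.2 (hlamp x (hsub hx))), sub_sub_cancel, hψ x (hsub hx),
        smul_eq_mul, Pker]
      ring
    have hP : Pker lam p z 0 * lam 0 = p (transportTime lam z) := by
      rw [Pker, h0, sub_zero, div_mul_cancel₀ _ (hlamp 0 ⟨le_rfl, zero_le_one⟩).ne']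
    rw [hint, hP, add_comm, hV]
end
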